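/- Let (R,B) be an EIC problem with problem graph G=(V,E) and let 𝒜_{(R,B)} be the image of the column repetition function φ_{(R,B)}. Then ω(Ḡ) ≤ minrk_2(G) ≤ rminrk_2(G, 𝒜_{(R,B)}) ≤ χ(Ḡ); that is, the maximum size of an independent set of G is at most minrk_2(G), which is at most the restricted minrank rminrk_2(G, 𝒜_{(R,B)}), which is at most the minimum number of cliques of G needed to partition V. -/

import Mathlib

open Matrix BigOperators

namespace EIC

variable {n m : ℕ}

/-- The vertex set of the problem graph of the EIC problem `(R, B)`:
one vertex for each requirement pair `(u, a)` with `R u a = 1`. -/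
abbrev Vtx (R : Matrix (Fin n) (Fin m) (ZMod 2)) : Type :=
  {p : Fin n × Fin m // R p.1 p.2 = 1}

/-- `(R, B)` have disjoint supports: no position has both `B = 1` and `R = 1`. -/
def DisjointSupports (R B : Matrix (Fin n) (Fin m) (ZMod 2)) : Prop :=
  ∀ u a, ¬(B u a = 1 ∧ R u a = 1)

/-- The standard basis vector `e_a ∈ F_2^m`. -/
def e (m : ℕ) (a : Fin m) : Fin m → ZMod 2 := Pi.single a 1

/-- `β` (with rows indexed by `ι`) is a centralized linear broadcast solution to `(R, B)`:
for every requirement pair `(u, a)` there is `α` with `e_a = α · [β ; diag(B_u)]`. -/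
def IsCentralizedSolution (R B : Matrix (Fin n) (Fin m) (ZMod 2))
    {ι : Type} [Fintype ι] (β : Matrix ι (Fin m) (ZMod 2)) : Prop :=
  ∀ u a, R u a = 1 →
    ∃ α : ι ⊕ Fin m → ZMod 2,
      e m a = α ᵥ* Matrix.fromRows β (Matrix.diagonal (B u))

/-- `(C)_{(R,B)}`: the minimum length of a centralized linear broadcast solution. -/
noncomputable def Copt (R B : Matrix (Fin n) (Fin m) (ZMod 2)) : ℕ :=
  sInf {h | ∃ β : Matrix (Fin h) (Fin m) (ZMod 2), IsCentralizedSolution R B β}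

/-- The vertical concatenation of the matrices `β u`, `u ∈ [n]`. -/
def vconcat {h : Fin n → ℕ} (β : ∀ u : Fin n, Matrix (Fin (h u)) (Fin m) (ZMod 2)) :
    Matrix ((ℓ : Fin n) × Fin (h ℓ)) (Fin m) (ZMod 2) :=
  Matrix.of fun p => β p.1 p.2

/-- `β⁽¹⁾, …, β⁽ⁿ⁾` is a (decentralized) linear broadcast solution to `(R, B)`. -/
def IsBroadcastSolution (R B : Matrix (Fin n) (Fin m) (ZMod 2))
    {h : Fin n → ℕ} (β : ∀ u : Fin n, Matrix (Fin (h u)) (Fin m) (ZMod 2)) : Prop :=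
  (∀ u a, B u a = 0 → ∀ i, β u i a = 0) ∧
  ∀ u a, R u a = 1 →
    ∃ α : ((ℓ : Fin n) × Fin (h ℓ)) ⊕ Fin m → ZMod 2,
      e m a = α ᵥ* Matrix.fromRows (vconcat β) (Matrix.diagonal (B u))

/-- `(D)_{(R,B)}`: the minimum length of a decentralized linear broadcast solution. -/
noncomputable def Dopt (R B : Matrix (Fin n) (Fin m) (ZMod 2)) : ℕ :=
  sInf {s | ∃ (h : Fin n → ℕ) (β : ∀ u : Fin n, Matrix (Fin (h u)) (Fin m) (ZMod 2)),
    IsBroadcastSolution R B β ∧ ∑ u, h u = s}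

/-- A task-based solution: a linear broadcast solution where every requirement pair
`(u, a)` can be decoded from the broadcast of a single responsible sender `ℓ`. -/
def IsTaskBased (R B : Matrix (Fin n) (Fin m) (ZMod 2))
    {h : Fin n → ℕ} (β : ∀ u : Fin n, Matrix (Fin (h u)) (Fin m) (ZMod 2)) : Prop :=
  IsBroadcastSolution R B β ∧
  ∀ u a, R u a = 1 → ∃ ℓ : Fin n, ∃ α : Fin (h ℓ) ⊕ Fin m → ZMod 2,
    e m a = α ᵥ* Matrix.fromRows (β ℓ) (Matrix.diagonal (B u))

/-- `(T)_{(R,B)}`: the minimum length of a task-based solution. -/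
noncomputable def Topt (R B : Matrix (Fin n) (Fin m) (ZMod 2)) : ℕ :=
  sInf {s | ∃ (h : Fin n → ℕ) (β : ∀ u : Fin n, Matrix (Fin (h u)) (Fin m) (ZMod 2)),
    IsTaskBased R B β ∧ ∑ u, h u = s}

/-- The edge relation of the problem graph: for distinct requirement pairs `(u,a)`, `(w,b)`,
there is an edge from `v_{(u,a)}` to `v_{(w,b)}` iff `B u b = 1` or `a = b`. -/
def probEdge (R B : Matrix (Fin n) (Fin m) (ZMod 2)) (v w : Vtx R) : Prop :=
  v ≠ w ∧ (B v.1.1 w.1.2 = 1 ∨ v.1.2 = w.1.2)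

/-- A matrix `A` fits a directed graph with edge relation `E`. -/
def Fits {V : Type} (E : V → V → Prop) (A : Matrix V V (ZMod 2)) : Prop :=
  (∀ k, A k k = 1) ∧ ∀ k l, k ≠ l → ¬ E k l → A k l = 0

/-- `minrk₂`: the minimum `F₂`-rank of a matrix fitting the graph. -/
noncomputable def minrk {V : Type} [Fintype V] (E : V → V → Prop) : ℕ :=
  sInf {r | ∃ A : Matrix V V (ZMod 2), Fits E A ∧ A.rank = r}

/-- `rminrk₂`: the minimum `F₂`-rank of a matrix in `𝒜` fitting the graph. -/
noncomputable def rminrk {V : Type} [Fintype V] (E : V → V → Prop)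
    (𝒜 : Set (Matrix V V (ZMod 2))) : ℕ :=
  sInf {r | ∃ A ∈ 𝒜, Fits E A ∧ A.rank = r}

/-- The column repetition function `φ_{(R,B)}`: the column of `φ(A)` indexed by
`v_{(u,a)}` is the `a`-th column of `A`. -/
def phi (R : Matrix (Fin n) (Fin m) (ZMod 2))
    (A : Matrix (Vtx R) (Fin m) (ZMod 2)) : Matrix (Vtx R) (Vtx R) (ZMod 2) :=
  Matrix.of fun k v => A k v.1.2

/-- The sender neighborhood `N_u = {v_{(w,b)} ∈ V : B u b = 1}`. -/
def senderNbhd (R B : Matrix (Fin n) (Fin m) (ZMod 2)) (u : Fin n) : Set (Vtx R) :=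
  {v | B u v.1.2 = 1}

/-- A neighborhood partition `{Ñ_1, …, Ñ_n}`. -/
def IsNbhdPartition (R B : Matrix (Fin n) (Fin m) (ZMod 2))
    (N : Fin n → Set (Vtx R)) : Prop :=
  (∀ i, N i ⊆ senderNbhd R B i) ∧
  (∀ i j, i ≠ j → Disjoint (N i) (N j)) ∧
  (⋃ i, N i) = Set.univ

open Classical in
/-- `R^(i)`: the request matrix of the EIC subproblem induced by `Ñ_i`; it has ones
exactly at the requirement pairs whose vertex lies in `Ñ_i`. -/
noncomputable def Rsub (R : Matrix (Fin n) (Fin m) (ZMod 2))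
    (N : Fin n → Set (Vtx R)) (i : Fin n) : Matrix (Fin n) (Fin m) (ZMod 2) :=
  Matrix.of fun u a =>
    if hr : R u a = 1 then (if (⟨(u, a), hr⟩ : Vtx R) ∈ N i then 1 else 0) else 0

open Classical in
/-- `B^(i)`: the has-matrix of the EIC subproblem induced by `Ñ_i`; it agrees with `B`
on the columns of blocks requested in `Ñ_i` and is zero elsewhere. -/
noncomputable def Bsub (R B : Matrix (Fin n) (Fin m) (ZMod 2))
    (N : Fin n → Set (Vtx R)) (i : Fin n) : Matrix (Fin n) (Fin m) (ZMod 2) :=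
  Matrix.of fun u a => if ∃ v ∈ N i, v.1.2 = a then B u a else 0

/-- `Cl` is a clique for the edge relation `E`. -/
def IsClique {V : Type} (E : V → V → Prop) (Cl : Set V) : Prop :=
  ∀ k ∈ Cl, ∀ l ∈ Cl, k ≠ l → E k l

/-- `I` is an independent set for the edge relation `E` (no edge in either direction). -/
def IsIndep {V : Type} (E : V → V → Prop) (I : Set V) : Prop :=
  ∀ k ∈ I, ∀ l ∈ I, k ≠ l → ¬ E k l ∧ ¬ E l k

/-- `χ(Ḡ|_S)`: the minimum number of cliques of the induced subgraph `G|_S`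
needed to partition `S`. -/
noncomputable def cliqueCoverNum {V : Type} (E : V → V → Prop) (S : Set V) : ℕ :=
  sInf {t | ∃ Cl : Fin t → Set V, (∀ i, Cl i ⊆ S) ∧ (∀ i, IsClique E (Cl i)) ∧
    (∀ i j, i ≠ j → Disjoint (Cl i) (Cl j)) ∧ (⋃ i, Cl i) = S}

/-- `χ(G)`: the minimum number of independent sets of `G` needed to partition
its vertex set. -/
noncomputable def chromNum {V : Type} [Fintype V] (E : V → V → Prop) : ℕ :=
  sInf {t | ∃ I : Fin t → Set V, (∀ i, IsIndep E (I i)) ∧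
    (∀ i j, i ≠ j → Disjoint (I i) (I j)) ∧ (⋃ i, I i) = Set.univ}

/-- `ω(Ḡ|_S)`: the maximum size of an independent set of the induced subgraph `G|_S`. -/
noncomputable def indepNum {V : Type} (E : V → V → Prop) (S : Set V) : ℕ :=
  sSup {t | ∃ I ⊆ S, IsIndep E I ∧ I.ncard = t}

/-- The set of neighborhood-cliques: vertex sets of maximal cliques of the induced
subgraphs `G|_{N_i}`, over all senders `i`. -/
def nbhdCliques (R B : Matrix (Fin n) (Fin m) (ZMod 2)) : Set (Set (Vtx R)) :=
  {Cl | ∃ i : Fin n, Cl ⊆ senderNbhd R B i ∧ IsClique (probEdge R B) Cl ∧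
    ∀ Cl', Cl ⊆ Cl' → Cl' ⊆ senderNbhd R B i → IsClique (probEdge R B) Cl' → Cl' = Cl}

/-!
A matrix fitting `G` restricts to the identity on the rows and columns of an independent set `I`,
so its rank is at least `|I|`. Conversely, given a partition into cliques, let the row of `v` be the
indicator of all pairs whose block is requested somewhere in the clique containing `v`. Rows of the
same clique coincide, so the rank is at most the number of cliques, and columns of the same block
coincide by construction. The matrix fits `G` because whether `v_{(w,b)}` lies in the closed
out-neighbourhood of `v` depends only on `b`.
-/

section FittingMatrices

variable {V : Type} {E : V → V → Prop}

lemma fits_one [DecidableEq V] : Fits E (1 : Matrix V V (ZMod 2)) :=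
  ⟨fun _ => one_apply_eq _, fun _ _ hkl _ => one_apply_ne hkl⟩

lemma Fits.submatrix_eq_one [DecidableEq V] {A : Matrix V V (ZMod 2)} (hA : Fits E A)
    {I : Set V} (hI : IsIndep E I) :
    A.submatrix (Subtype.val : I → V) (Subtype.val : I → V) = 1 := by
  ext i j
  rcases eq_or_ne i j with rfl | hij
  · rw [submatrix_apply, hA.1, one_apply_eq]
  · have hij' : (i : V) ≠ j := Subtype.coe_ne_coe.mpr hij
    rw [submatrix_apply, hA.2 i j hij' (hI i i.2 j j.2 hij').1, one_apply_ne hij]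

variable [Fintype V]

lemma Fits.ncard_le_rank {A : Matrix V V (ZMod 2)} (hA : Fits E A) {I : Set V}
    (hI : IsIndep E I) : I.ncard ≤ A.rank := by
  classical
  calc
    I.ncard = (1 : Matrix I I (ZMod 2)).rank := by
      rw [rank_one, Fintype.card_eq_nat_card, Nat.card_coe_set_eq]
    _ = (A.submatrix (Subtype.val : I → V) (Subtype.val : I → V)).rank := by
      rw [hA.submatrix_eq_one hI]
    _ ≤ A.rank := rank_submatrix_le A _ _

lemma exists_fits_rank_eq_minrk (E : V → V → Prop) :
    ∃ A : Matrix V V (ZMod 2), Fits E A ∧ A.rank = minrk E := by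
  classical
  exact Nat.sInf_mem (s := {r | ∃ A : Matrix V V (ZMod 2), Fits E A ∧ A.rank = r})
    ⟨_, 1, fits_one, rfl⟩

lemma minrk_le_rank {A : Matrix V V (ZMod 2)} (hA : Fits E A) : minrk E ≤ A.rank :=
  Nat.sInf_le ⟨A, hA, rfl⟩

lemma rminrk_le_rank {𝒜 : Set (Matrix V V (ZMod 2))} {A : Matrix V V (ZMod 2)} (hA𝒜 : A ∈ 𝒜)
    (hA : Fits E A) : rminrk E 𝒜 ≤ A.rank :=
  Nat.sInf_le ⟨A, hA𝒜, hA, rfl⟩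

lemma indepNum_le_minrk (E : V → V → Prop) (S : Set V) : indepNum E S ≤ minrk E := by
  obtain ⟨A, hA, hrank⟩ := exists_fits_rank_eq_minrk E
  have empty_indep : IsIndep E ∅ := fun _ hk => hk.elim
  refine csSup_le ⟨0, ∅, S.empty_subset, empty_indep, Set.ncard_empty V⟩ ?_
  rintro _ ⟨I, -, hI, rfl⟩
  exact (hA.ncard_le_rank hI).trans_eq hrank

lemma minrk_le_rminrk {𝒜 : Set (Matrix V V (ZMod 2))} (h𝒜 : ∃ A ∈ 𝒜, Fits E A) :
    minrk E ≤ rminrk E 𝒜 := by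
  obtain ⟨A₀, hA₀𝒜, hA₀⟩ := h𝒜
  obtain ⟨A, -, hA, hrank⟩ : ∃ A ∈ 𝒜, Fits E A ∧ A.rank = rminrk E 𝒜 :=
    Nat.sInf_mem (s := {r | ∃ A ∈ 𝒜, Fits E A ∧ A.rank = r}) ⟨_, A₀, hA₀𝒜, hA₀, rfl⟩
  exact (minrk_le_rank hA).trans_eq hrank

end FittingMatrices

section CliqueCovers

variable {V : Type} {β ι : Type*} {E : V → V → Prop} {c : V → β}

lemma exists_cliqueCover (E : V → V → Prop) (S : Set V) [Finite S] :
    ∃ Cl : Fin (cliqueCoverNum E S) → Set V, (∀ i, IsClique E (Cl i)) ∧ ⋃ i, Cl i = S := by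
  let e := Finite.equivFin S
  let singletons (i : Fin (Nat.card S)) : Set V := {(e.symm i : V)}
  have singletons_clique (i) : IsClique E (singletons i) :=
    fun _ hk _ hl hkl => (hkl (hk.trans hl.symm)).elim
  have singletons_disjoint (i j) (hij : i ≠ j) : Disjoint (singletons i) (singletons j) :=
    Set.disjoint_singleton.mpr (Subtype.coe_ne_coe.mpr (e.symm.injective.ne hij))
  have iUnion_singletons : ⋃ i, singletons i = S :=
    (e.symm.surjective.iUnion_comp fun v : S => {(v : V)}).trans (Set.iUnion_of_singleton_coe S)
  obtain ⟨Cl, -, hCl, -, hcover⟩ := Nat.sInf_mem (s := {t | ∃ Cl : Fin t → Set V,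
      (∀ i, Cl i ⊆ S) ∧ (∀ i, IsClique E (Cl i)) ∧
      (∀ i j, i ≠ j → Disjoint (Cl i) (Cl j)) ∧ (⋃ i, Cl i) = S})
    ⟨_, singletons, fun i => Set.singleton_subset_iff.mpr (e.symm i).2, singletons_clique,
      singletons_disjoint, iUnion_singletons⟩
  exact ⟨Cl, hCl, hcover⟩

/-- Repetition of columns along a labelling `c` of the vertices: the column of `l` is the column of
`A` at the label `c l`. The function `φ_{(R,B)}` is the case where `c` is the requested block. -/
def columnRepetition (c : V → β) (A : Matrix V β (ZMod 2)) : Matrix V V (ZMod 2) :=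
  A.submatrix id c

/-- Every closed out-neighbourhood `{k} ∪ {l | E k l}` is a union of fibres of the labelling `c`.
This is what makes matrices with repeated columns able to fit the graph. -/
def IsOutNbhdSaturated (E : V → V → Prop) (c : V → β) : Prop :=
  ∀ ⦃k v l⦄, c v = c l → (v = k ∨ E k v) → (l = k ∨ E k l)

/-- The matrix whose row `k` is the indicator of the labels occurring in the vertex set `Cl (f k)`
assigned to `k`, with columns repeated along the labelling `c`. It turns a cover by cliques into a
fitting matrix of small rank. -/
noncomputable def labelIndicatorMatrix (c : V → β) (Cl : ι → Set V) (f : V → ι) :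
    Matrix V V (ZMod 2) :=
  columnRepetition c (of fun k => (c '' Cl (f k)).indicator 1)

lemma IsOutNbhdSaturated.fits_labelIndicatorMatrix (hE : IsOutNbhdSaturated E c) {Cl : ι → Set V}
    (hCl : ∀ i, IsClique E (Cl i)) {f : V → ι} (hf : ∀ k, k ∈ Cl (f k)) :
    Fits E (labelIndicatorMatrix c Cl f) := by
  refine ⟨fun k => Set.indicator_of_mem (Set.mem_image_of_mem c (hf k)) 1, fun k l hkl hnot => ?_⟩
  refine Set.indicator_of_notMem ?_ 1
  rintro ⟨v, hv, hvl⟩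
  have hkv : v = k ∨ E k v := or_iff_not_imp_left.mpr fun hne => hCl _ k (hf k) v hv (Ne.symm hne)
  exact (hE hvl hkv).elim hkl.symm hnot

variable [Fintype V]

lemma rank_labelIndicatorMatrix_le [Fintype ι] (c : V → β) (Cl : ι → Set V) (f : V → ι) :
    (labelIndicatorMatrix c Cl f).rank ≤ Fintype.card ι := by
  let rows : Matrix ι V (ZMod 2) := of fun i l => (c '' Cl i).indicator 1 (c l)
  calc
    (labelIndicatorMatrix c Cl f).rank = (rows.submatrix f id).rank := rfl
    _ ≤ rows.rank := rank_submatrix_le rows f id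
    _ ≤ Fintype.card ι := rank_le_card_height rows

lemma IsOutNbhdSaturated.exists_fits_rank_le_cliqueCoverNum (hE : IsOutNbhdSaturated E c) :
    ∃ A ∈ Set.range (columnRepetition c), Fits E A ∧ A.rank ≤ cliqueCoverNum E Set.univ := by
  obtain ⟨Cl, hCl, hcover⟩ := exists_cliqueCover E Set.univ
  choose f hf using Set.iUnion_eq_univ_iff.mp hcover
  exact ⟨labelIndicatorMatrix c Cl f, Set.mem_range_self _,
    hE.fits_labelIndicatorMatrix hCl hf,
    (rank_labelIndicatorMatrix_le c Cl f).trans_eq (Fintype.card_fin _)⟩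

theorem minrk_bounds_general (hE : IsOutNbhdSaturated E c) :
    indepNum E Set.univ ≤ minrk E ∧
    minrk E ≤ rminrk E (Set.range (columnRepetition c)) ∧
    rminrk E (Set.range (columnRepetition c)) ≤ cliqueCoverNum E Set.univ := by
  obtain ⟨A, hA_range, hA, hrank⟩ := hE.exists_fits_rank_le_cliqueCoverNum
  exact ⟨indepNum_le_minrk E Set.univ, minrk_le_rminrk ⟨A, hA_range, hA⟩,
    (rminrk_le_rank hA_range hA).trans hrank⟩

end CliqueCovers

lemma isOutNbhdSaturated_probEdge (R B : Matrix (Fin n) (Fin m) (ZMod 2)) :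
    IsOutNbhdSaturated (probEdge R B) (fun v => v.1.2) := by
  intro k v l (hvl : v.1.2 = l.1.2) hv
  refine or_iff_not_imp_left.mpr fun hlk => ⟨Ne.symm hlk, ?_⟩
  rcases hv with rfl | ⟨-, hB | hkv⟩
  · exact Or.inr hvl
  · exact Or.inl (hvl ▸ hB)
  · exact Or.inr (hkv.trans hvl)

theorem minrk_bounds {n m : ℕ} (R B : Matrix (Fin n) (Fin m) (ZMod 2))
    (hdisj : DisjointSupports R B) :
    indepNum (probEdge R B) Set.univ ≤ minrk (probEdge R B) ∧
    minrk (probEdge R B) ≤ rminrk (probEdge R B) (Set.range (phi R)) ∧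
    rminrk (probEdge R B) (Set.range (phi R)) ≤ cliqueCoverNum (probEdge R B) Set.univ :=
  minrk_bounds_general (isOutNbhdSaturated_probEdge R B)

end EIC
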